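/- Let m ≥ 1 and let A₁, …, A_m be real symmetric 3×3 matrices. Then (Σ_{r=1}^m ‖A_r‖²)² ≥ 2 Σ_{1≤r<s≤m} ‖[A_r,A_s]‖². (This is the DDVV inequality P(3,m).) -/

import Mathlib

open Matrix BigOperators

/-- Frobenius norm squared of a real `3 × 3` matrix: the sum of the squares of all entries. -/
noncomputable def frobSq (A : Matrix (Fin 3) (Fin 3) ℝ) : ℝ :=
  ∑ i, ∑ j, (A i j) ^ 2

/-- The commutator `[A, B] = A * B - B * A`. -/
def mcomm (A B : Matrix (Fin 3) (Fin 3) ℝ) : Matrix (Fin 3) (Fin 3) ℝ :=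
  A * B - B * A

/-!
Along principal axes the coordinates of the family `A` are uncorrelated, so both sums over `A`
become sums over orthonormal symmetric matrices `E k` weighted by the second moments `x k ≥ 0`, and
the inequality reads `∑ k, ∑ l, x k * x l * ‖⁅E k, E l⁆‖ ^ 2 ≤ (∑ k, x k) ^ 2`. By subtracting the
smallest weight repeatedly, this follows once `∑ l ∈ t, ‖⁅E k, E l⁆‖ ^ 2 ≤ #t` for every finite set
`t` containing `k`. In an eigenbasis of `E k` one sees that each term is at most `2` and, by
Bessel's inequality, that the whole sum is at most the size `n` of the matrices. The first bound
settles `#t ≤ 2`, the second `#t ≥ n`; for `n ≤ 3` nothing is left.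
-/

open scoped InnerProductSpace

theorem two_mul_sum_ite_lt {ι R : Type*} [Fintype ι] [LinearOrder ι] [NonAssocSemiring R]
    {f : ι → ι → R} (hf : ∀ i j, f i j = f j i) (hf₀ : ∀ i, f i i = 0) :
    2 * ∑ i, ∑ j, (if i < j then f i j else 0) = ∑ i, ∑ j, f i j := by
  have swap : ∑ i, ∑ j, (if i < j then f i j else 0) = ∑ i, ∑ j, if j < i then f i j else 0 := by
    rw [Finset.sum_comm]
    simp only [hf]
  rw [two_mul]
  nth_rw 2 [swap]
  simp only [← Finset.sum_add_distrib]
  refine Finset.sum_congr rfl fun i _ => Finset.sum_congr rfl fun j _ => ?_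
  rcases lt_trichotomy i j with h | rfl | h
  · simp [h, h.not_gt]
  · simp [hf₀]
  · simp [h, h.not_gt]

theorem sum_mul_mul_nonneg_of_sum_nonneg {ι R : Type*} [CommRing R] [LinearOrder R]
    [IsStrictOrderedRing R] {L : Matrix ι ι R} (hL : L.IsSymm)
    (hrow : ∀ t : Finset ι, ∀ i ∈ t, 0 ≤ ∑ j ∈ t, L i j) (t : Finset ι) {x : ι → R}
    (hx : ∀ i ∈ t, 0 ≤ x i) : 0 ≤ ∑ i ∈ t, ∑ j ∈ t, x i * x j * L i j := by
  classical
  induction t using Finset.strongInduction generalizing x with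
  | H t ih =>
  obtain rfl | ht := t.eq_empty_or_nonempty
  · simp
  obtain ⟨i₀, hi₀, hmin⟩ := Finset.exists_min_image t x ht
  -- In `x = x i₀ + y` the cross terms are row sums, and `y` is supported on `t.erase i₀`.
  set y : ι → R := fun i => x i - x i₀ with hy
  have hy_nonneg : ∀ i ∈ t, 0 ≤ y i := fun i hi => sub_nonneg.2 (hmin i hi)
  have quadratic_nonneg : 0 ≤ ∑ i ∈ t, ∑ j ∈ t, y i * y j * L i j := by
    have := ih (t.erase i₀) (Finset.erase_ssubset hi₀)
      fun i hi => hy_nonneg i (Finset.mem_of_mem_erase hi)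
    simpa [Finset.sum_erase, hy] using this
  have linear_nonneg : 0 ≤ ∑ i ∈ t, y i * ∑ j ∈ t, L i j :=
    Finset.sum_nonneg fun i hi => mul_nonneg (hy_nonneg i hi) (hrow t i hi)
  have constant_nonneg : 0 ≤ ∑ i ∈ t, ∑ j ∈ t, L i j := Finset.sum_nonneg (hrow t)
  have linear_comm : ∑ i ∈ t, ∑ j ∈ t, y j * L i j = ∑ i ∈ t, y i * ∑ j ∈ t, L i j := by
    rw [Finset.sum_comm]
    simp only [Finset.mul_sum, hL.apply]
  calc 0 ≤ (∑ i ∈ t, ∑ j ∈ t, y i * y j * L i j) + 2 * x i₀ * (∑ i ∈ t, y i * ∑ j ∈ t, L i j)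
        + x i₀ ^ 2 * ∑ i ∈ t, ∑ j ∈ t, L i j := by
        have := hx i₀ hi₀
        positivity
    _ = (∑ i ∈ t, ∑ j ∈ t, y i * y j * L i j) + x i₀ * (∑ i ∈ t, y i * ∑ j ∈ t, L i j)
        + x i₀ * (∑ i ∈ t, ∑ j ∈ t, y j * L i j) + x i₀ ^ 2 * ∑ i ∈ t, ∑ j ∈ t, L i j := by
        rw [linear_comm]; ring
    _ = ∑ i ∈ t, ∑ j ∈ t, x i * x j * L i j := by
        simp only [Finset.mul_sum, ← Finset.sum_add_distrib]
        exact Finset.sum_congr rfl fun i _ => Finset.sum_congr rfl fun j _ => by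
          simp only [hy]; ring

theorem sub_sq_le_two_mul_sum_sq {ι : Type*} [Fintype ι] (d : ι → ℝ) (i j : ι) :
    (d i - d j) ^ 2 ≤ 2 * ∑ k, d k ^ 2 := by
  obtain rfl | hij := eq_or_ne i j
  · simpa using Finset.sum_nonneg fun k _ => sq_nonneg (d k)
  · have : d i ^ 2 + d j ^ 2 ≤ ∑ k, d k ^ 2 :=
      Finset.add_le_sum (fun k _ => sq_nonneg (d k)) (Finset.mem_univ i) (Finset.mem_univ j) hij
    linarith [sq_nonneg (d i + d j)]

theorem sum_sum_sub_sq_le {ι : Type*} [Fintype ι] (d : ι → ℝ) :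
    ∑ i, ∑ j, (d i - d j) ^ 2 ≤ 2 * Fintype.card ι * ∑ i, d i ^ 2 := by
  have expand : ∑ i, ∑ j, (d i - d j) ^ 2 =
      2 * Fintype.card ι * ∑ i, d i ^ 2 - 2 * (∑ i, d i) ^ 2 := by
    simp only [sub_sq, Finset.sum_add_distrib, Finset.sum_sub_distrib, Finset.sum_const,
      ← Finset.mul_sum, ← Finset.sum_mul, Finset.card_univ, nsmul_eq_mul]
    ring
  linarith [sq_nonneg (∑ i, d i)]

section PrincipalAxes

variable {𝕜 V W ι κ : Type*} [RCLike 𝕜] [NormedAddCommGroup V] [InnerProductSpace 𝕜 V]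
  [NormedAddCommGroup W] [InnerProductSpace 𝕜 W] [Fintype ι] [Fintype κ]

variable (𝕜) in
/-- The second moment of the finite family `a` along the vector `u`. -/
noncomputable def secondMoment (a : ι → V) (u : V) : ℝ :=
  ∑ r, ‖⟪u, a r⟫_𝕜‖ ^ 2

variable (𝕜) in
/-- The vectors `b k` are principal axes of the finite family `a`: the coordinates of `a` along
different axes are uncorrelated (without centring), that is, the moment form
`(u, v) ↦ ∑ r, ⟪u, a r⟫ * ⟪a r, v⟫` is diagonal in `b`. -/
def ArePrincipalAxes (b : κ → V) (a : ι → V) : Prop :=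
  Pairwise fun k l => ∑ r, ⟪b k, a r⟫_𝕜 * ⟪a r, b l⟫_𝕜 = 0

theorem secondMoment_nonneg (a : ι → V) (u : V) : 0 ≤ secondMoment 𝕜 a u :=
  Finset.sum_nonneg fun _ _ => sq_nonneg _

theorem exists_orthonormalBasis_arePrincipalAxes [FiniteDimensional 𝕜 V] (a : ι → V) :
    ∃ b : OrthonormalBasis (Fin (Module.finrank 𝕜 V)) 𝕜 V, ArePrincipalAxes 𝕜 b a := by
  let T : V →ₗ[𝕜] V := ∑ r, (InnerProductSpace.rankOne 𝕜 (a r) (a r)).toLinearMap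
  have T_apply (x : V) : T x = ∑ r, ⟪a r, x⟫_𝕜 • a r := by simp [T]
  have hT : T.IsSymmetric := fun x y => by
    simp [T_apply, sum_inner, inner_sum, inner_smul_left, inner_smul_right, mul_comm]
  refine ⟨hT.eigenvectorBasis rfl, fun k l hkl => ?_⟩
  set b := hT.eigenvectorBasis rfl
  calc ∑ r, ⟪b k, a r⟫_𝕜 * ⟪a r, b l⟫_𝕜 = ⟪b k, T (b l)⟫_𝕜 := by
        simp [T_apply, inner_sum, inner_smul_right, mul_comm]
    _ = 0 := by
        rw [hT.apply_eigenvectorBasis, inner_smul_right, b.inner_eq_zero hkl, mul_zero]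

variable {b : OrthonormalBasis κ 𝕜 V} {a : ι → V}

namespace ArePrincipalAxes

theorem sum_norm_sq_map (h : ArePrincipalAxes 𝕜 b a) (f : V →ₗ[𝕜] W) :
    ∑ r, ‖f (a r)‖ ^ 2 = ∑ k, secondMoment 𝕜 a (b k) * ‖f (b k)‖ ^ 2 := by
  have f_apply (r : ι) : f (a r) = ∑ k, ⟪b k, a r⟫_𝕜 • f (b k) := by
    simpa only [map_sum, map_smul] using congrArg f (b.sum_repr' (a r)).symm
  suffices ((∑ r, ‖f (a r)‖ ^ 2 : ℝ) : 𝕜) =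
      ((∑ k, secondMoment 𝕜 a (b k) * ‖f (b k)‖ ^ 2 : ℝ) : 𝕜) from mod_cast this
  simp only [secondMoment]
  push_cast
  calc ∑ r, (‖f (a r)‖ : 𝕜) ^ 2
      = ∑ r, ∑ k, ∑ l, ⟪b k, a r⟫_𝕜 * ⟪a r, b l⟫_𝕜 * ⟪f (b l), f (b k)⟫_𝕜 := by
        refine Finset.sum_congr rfl fun r _ => ?_
        rw [← inner_self_eq_norm_sq_to_K (𝕜 := 𝕜), f_apply]
        simp only [sum_inner, inner_sum, inner_smul_left, inner_smul_right, inner_conj_symm,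
          Finset.mul_sum, mul_assoc]
    _ = ∑ k, ∑ l, (∑ r, ⟪b k, a r⟫_𝕜 * ⟪a r, b l⟫_𝕜) * ⟪f (b l), f (b k)⟫_𝕜 := by
        simp only [Finset.sum_mul]
        rw [Finset.sum_comm]
        exact Finset.sum_congr rfl fun k _ => Finset.sum_comm
    _ = ∑ k, (∑ r, ⟪b k, a r⟫_𝕜 * ⟪a r, b k⟫_𝕜) * ⟪f (b k), f (b k)⟫_𝕜 :=
        Finset.sum_congr rfl fun k _ =>
          Fintype.sum_eq_single k fun l hl => by rw [h hl.symm, zero_mul]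
    _ = ∑ k, (∑ r, (‖⟪b k, a r⟫_𝕜‖ : 𝕜) ^ 2) * (‖f (b k)‖ : 𝕜) ^ 2 := by
        simp only [inner_self_eq_norm_sq_to_K, ← inner_conj_symm (a _) (b _), RCLike.mul_conj]

theorem sum_norm_sq (h : ArePrincipalAxes 𝕜 b a) :
    ∑ r, ‖a r‖ ^ 2 = ∑ k, secondMoment 𝕜 a (b k) := by
  simpa using h.sum_norm_sq_map LinearMap.id

theorem sum_norm_sq_map₂ (h : ArePrincipalAxes 𝕜 b a) (β : V →ₗ[𝕜] V →ₗ[𝕜] W) :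
    ∑ r, ∑ s, ‖β (a r) (a s)‖ ^ 2 =
      ∑ k, ∑ l, secondMoment 𝕜 a (b k) * secondMoment 𝕜 a (b l) * ‖β (b k) (b l)‖ ^ 2 := by
  calc ∑ r, ∑ s, ‖β (a r) (a s)‖ ^ 2
      = ∑ s, ∑ k, secondMoment 𝕜 a (b k) * ‖β (b k) (a s)‖ ^ 2 := by
        rw [Finset.sum_comm]
        exact Finset.sum_congr rfl fun s _ => h.sum_norm_sq_map (β.flip (a s))
    _ = ∑ k, secondMoment 𝕜 a (b k) * ∑ s, ‖β (b k) (a s)‖ ^ 2 := by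
        rw [Finset.sum_comm]
        simp only [Finset.mul_sum]
    _ = _ := by
        simp only [h.sum_norm_sq_map (β _), Finset.mul_sum, mul_assoc]

end ArePrincipalAxes

end PrincipalAxes

section Frobenius

open scoped Matrix.Norms.Frobenius

theorem frobenius_norm_sq {𝕜 m n : Type*} [RCLike 𝕜] [Fintype m] [Fintype n] (A : Matrix m n 𝕜) :
    ‖A‖ ^ 2 = ∑ i, ∑ j, ‖A i j‖ ^ 2 := by
  have h : 0 ≤ ∑ i, ∑ j, ‖A i j‖ ^ (2 : ℝ) := by positivity
  rw [frobenius_norm_def, ← Real.sqrt_eq_rpow, Real.sq_sqrt h]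
  simp only [Real.rpow_two]

/-- The inner product `⟪A, B⟫ = tr (Aᴴ * B)`, which induces the Frobenius norm. -/
noncomputable local instance frobeniusInnerProductSpace {𝕜 m n : Type*} [RCLike 𝕜] [Fintype m]
    [Fintype n] : InnerProductSpace 𝕜 (Matrix m n 𝕜) where
  inner A B := ∑ i, ∑ j, ⟪A i j, B i j⟫_𝕜
  norm_sq_eq_re_inner A := by
    simp only [frobenius_norm_sq, map_sum, inner_self_eq_norm_sq]
  conj_inner_symm A B := by simp only [map_sum, inner_conj_symm]
  add_left A B C := by simp only [Matrix.add_apply, inner_add_left, Finset.sum_add_distrib]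
  smul_left A B c := by simp only [Matrix.smul_apply, inner_smul_left, Finset.mul_sum]

section InnerProduct

variable {𝕜 m n : Type*} [RCLike 𝕜] [Fintype m] [Fintype n]

theorem frobenius_inner_def (A B : Matrix m n 𝕜) : ⟪A, B⟫_𝕜 = ∑ i, ∑ j, ⟪A i j, B i j⟫_𝕜 :=
  rfl

theorem frobenius_inner_eq_trace (A B : Matrix m n 𝕜) : ⟪A, B⟫_𝕜 = (Aᴴ * B).trace := by
  rw [frobenius_inner_def, Finset.sum_comm]
  simp only [trace, diag_apply, mul_apply, conjTranspose_apply, RCLike.inner_apply',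
    RCLike.star_def]

variable [DecidableEq n]

theorem frobenius_inner_conjStarAlgAut (U : unitary (Matrix n n 𝕜)) (A B : Matrix n n 𝕜) :
    ⟪Unitary.conjStarAlgAut 𝕜 _ U A, Unitary.conjStarAlgAut 𝕜 _ U B⟫_𝕜 = ⟪A, B⟫_𝕜 := by
  rw [frobenius_inner_eq_trace, frobenius_inner_eq_trace, ← star_eq_conjTranspose,
    ← star_eq_conjTranspose, ← map_star, ← map_mul, Unitary.conjStarAlgAut_apply, trace_mul_cycle,
    Unitary.coe_star_mul_self, one_mul]

theorem frobenius_norm_conjStarAlgAut (U : unitary (Matrix n n 𝕜)) (A : Matrix n n 𝕜) :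
    ‖Unitary.conjStarAlgAut 𝕜 _ U A‖ = ‖A‖ := by
  rw [norm_eq_sqrt_re_inner (𝕜 := 𝕜), frobenius_inner_conjStarAlgAut, ← norm_eq_sqrt_re_inner]

end InnerProduct

section Commutator

variable {𝕜 n : Type*} [RCLike 𝕜] [Fintype n] [DecidableEq n] {A : Matrix n n 𝕜}

/-- The change of coordinates `B ↦ star U * B * U` to an orthonormal eigenbasis of `A`. -/
noncomputable def toEigenbasis (hA : A.IsHermitian) : Matrix n n 𝕜 ≃⋆ₐ[𝕜] Matrix n n 𝕜 :=
  Unitary.conjStarAlgAut 𝕜 _ (star hA.eigenvectorUnitary)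

theorem toEigenbasis_self (hA : A.IsHermitian) :
    toEigenbasis hA A = diagonal (RCLike.ofReal ∘ hA.eigenvalues) :=
  hA.conjStarAlgAut_star_eigenvectorUnitary

theorem inner_toEigenbasis (hA : A.IsHermitian) (B C : Matrix n n 𝕜) :
    ⟪toEigenbasis hA B, toEigenbasis hA C⟫_𝕜 = ⟪B, C⟫_𝕜 :=
  frobenius_inner_conjStarAlgAut _ B C

theorem norm_toEigenbasis (hA : A.IsHermitian) (B : Matrix n n 𝕜) : ‖toEigenbasis hA B‖ = ‖B‖ :=
  frobenius_norm_conjStarAlgAut _ B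

theorem norm_sq_eq_sum_eigenvalues_sq (hA : A.IsHermitian) :
    ‖A‖ ^ 2 = ∑ i, hA.eigenvalues i ^ 2 := by
  rw [← norm_toEigenbasis hA, toEigenbasis_self, frobenius_norm_diagonal,
    EuclideanSpace.norm_sq_eq]
  simp

theorem norm_lie_comm (A B : Matrix n n 𝕜) : ‖⁅A, B⁆‖ = ‖⁅B, A⁆‖ := by
  rw [Ring.lie_def, Ring.lie_def, norm_sub_rev]

theorem norm_lie_self (A : Matrix n n 𝕜) : ‖⁅A, A⁆‖ = 0 := by
  rw [Ring.lie_def, sub_self, norm_zero]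

theorem norm_sq_lie_diagonal (d : n → 𝕜) (B : Matrix n n 𝕜) :
    ‖⁅diagonal d, B⁆‖ ^ 2 = ∑ i, ∑ j, ‖d i - d j‖ ^ 2 * ‖B i j‖ ^ 2 := by
  have lie_apply (i j : n) : ⁅diagonal d, B⁆ i j = (d i - d j) * B i j := by
    rw [Ring.lie_def, Matrix.sub_apply, diagonal_mul, mul_diagonal, mul_comm (B i j), sub_mul]
  simp only [frobenius_norm_sq, lie_apply, norm_mul, mul_pow]

theorem norm_sq_lie_eq_sum (hA : A.IsHermitian) (B : Matrix n n 𝕜) :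
    ‖⁅A, B⁆‖ ^ 2 =
      ∑ i, ∑ j, (hA.eigenvalues i - hA.eigenvalues j) ^ 2 * ‖toEigenbasis hA B i j‖ ^ 2 := by
  have map_lie : toEigenbasis hA ⁅A, B⁆ = ⁅toEigenbasis hA A, toEigenbasis hA B⁆ := by
    simp only [Ring.lie_def, map_sub, map_mul]
  rw [← norm_toEigenbasis hA, map_lie, toEigenbasis_self, norm_sq_lie_diagonal]
  simp only [Function.comp_apply, ← RCLike.ofReal_sub, RCLike.norm_ofReal, sq_abs]

theorem norm_sq_lie_le (hA : A.IsHermitian) (B : Matrix n n 𝕜) :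
    ‖⁅A, B⁆‖ ^ 2 ≤ 2 * ‖A‖ ^ 2 * ‖B‖ ^ 2 := by
  rw [norm_sq_lie_eq_sum hA, norm_sq_eq_sum_eigenvalues_sq hA, ← norm_toEigenbasis hA B,
    frobenius_norm_sq, Finset.mul_sum]
  refine Finset.sum_le_sum fun i _ => ?_
  rw [Finset.mul_sum]
  gcongr
  exact sub_sq_le_two_mul_sum_sq _ _ _

end Commutator

section Orthonormal

variable {n κ : Type*} [Fintype n] {E : κ → Matrix n n ℝ}

theorem sum_offDiag_entry_sq_le (hE : Orthonormal ℝ E) (hE_herm : ∀ k, (E k).IsHermitian)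
    (t : Finset κ) {i j : n} (hij : i ≠ j) : ∑ k ∈ t, E k i j ^ 2 ≤ 1 / 2 := by
  classical
  set X : Matrix n n ℝ := single i j 1 + single j i 1 with hX
  have inner_single (B : Matrix n n ℝ) (p q : n) : ⟪B, single p q 1⟫_ℝ = B p q := by
    simp [frobenius_inner_eq_trace, trace_mul_single]
  have inner_X (k : κ) : ⟪E k, X⟫_ℝ = 2 * E k i j := by
    have := (hE_herm k).apply i j
    rw [star_trivial] at this
    rw [hX, inner_add_right, inner_single, inner_single, this, two_mul]
  have norm_X : ‖X‖ ^ 2 = 2 := by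
    rw [← real_inner_self_eq_norm_sq]
    nth_rw 2 [hX]
    rw [inner_add_right, inner_single, inner_single]
    simp [hX, hij, hij.symm, one_add_one_eq_two]
  have bessel := hE.sum_inner_products_le X (s := t)
  simp only [inner_X, norm_X, Real.norm_eq_abs, sq_abs, mul_pow, ← Finset.mul_sum] at bessel
  linarith

variable [DecidableEq n]

theorem sum_norm_sq_lie_le (hE : Orthonormal ℝ E) (hE_herm : ∀ k, (E k).IsHermitian)
    (t : Finset κ) {A : Matrix n n ℝ} (hA : A.IsHermitian) :
    ∑ k ∈ t, ‖⁅A, E k⁆‖ ^ 2 ≤ Fintype.card n * ‖A‖ ^ 2 := by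
  set d := hA.eigenvalues
  set F : κ → Matrix n n ℝ := fun k => toEigenbasis hA (E k)
  have F_orthonormal : Orthonormal ℝ F :=
    ⟨fun k => (norm_toEigenbasis hA _).trans (hE.1 k),
      fun k l hkl => (inner_toEigenbasis hA _ _).trans (hE.2 hkl)⟩
  have F_hermitian (k : κ) : (F k).IsHermitian := (hE_herm k).isSelfAdjoint.map (toEigenbasis hA)
  calc ∑ k ∈ t, ‖⁅A, E k⁆‖ ^ 2
      = ∑ i, ∑ j, (d i - d j) ^ 2 * ∑ k ∈ t, F k i j ^ 2 := by
        simp only [norm_sq_lie_eq_sum hA, Finset.mul_sum, Real.norm_eq_abs, sq_abs]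
        rw [Finset.sum_comm]
        exact Finset.sum_congr rfl fun i _ => Finset.sum_comm
    _ ≤ ∑ i, ∑ j, (d i - d j) ^ 2 * (1 / 2) := by
        refine Finset.sum_le_sum fun i _ => Finset.sum_le_sum fun j _ => ?_
        obtain rfl | hij := eq_or_ne i j
        · simp
        · gcongr
          exact sum_offDiag_entry_sq_le F_orthonormal F_hermitian t hij
    _ ≤ Fintype.card n * ‖A‖ ^ 2 := by
        rw [norm_sq_eq_sum_eigenvalues_sq hA]
        simp only [← Finset.sum_mul]
        linarith [sum_sum_sub_sq_le d]

theorem sum_norm_sq_lie_le_card (hn : Fintype.card n ≤ 3) (hE : Orthonormal ℝ E)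
    (hE_herm : ∀ k, (E k).IsHermitian) {t : Finset κ} {k : κ} (hk : k ∈ t) :
    ∑ l ∈ t, ‖⁅E k, E l⁆‖ ^ 2 ≤ t.card := by
  classical
  obtain ht | ht : Fintype.card n ≤ t.card ∨ t.card ≤ 2 := by omega
  · calc ∑ l ∈ t, ‖⁅E k, E l⁆‖ ^ 2 ≤ Fintype.card n * ‖E k‖ ^ 2 :=
          sum_norm_sq_lie_le hE hE_herm t (hE_herm k)
      _ ≤ t.card := by rw [hE.1 k]; simpa using ht
  · have pair_le (l : κ) : ‖⁅E k, E l⁆‖ ^ 2 ≤ 2 := by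
      simpa [hE.1] using norm_sq_lie_le (hE_herm k) (E l)
    calc ∑ l ∈ t, ‖⁅E k, E l⁆‖ ^ 2 = ∑ l ∈ t.erase k, ‖⁅E k, E l⁆‖ ^ 2 := by
          rw [Finset.sum_erase _ (by simp [norm_lie_self])]
      _ ≤ (t.erase k).card • (2 : ℝ) := Finset.sum_le_card_nsmul _ _ _ fun l _ => pair_le l
      _ ≤ t.card := by
          rw [nsmul_eq_mul]
          have := Finset.card_erase_add_one hk
          norm_cast
          omega

theorem sum_mul_mul_norm_sq_lie_le [Fintype κ] (hn : Fintype.card n ≤ 3) (hE : Orthonormal ℝ E)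
    (hE_herm : ∀ k, (E k).IsHermitian) {x : κ → ℝ} (hx : ∀ k, 0 ≤ x k) :
    ∑ k, ∑ l, x k * x l * ‖⁅E k, E l⁆‖ ^ 2 ≤ (∑ k, x k) ^ 2 := by
  let L : Matrix κ κ ℝ := of fun k l => 1 - ‖⁅E k, E l⁆‖ ^ 2
  have hL : L.IsSymm := IsSymm.ext fun k l => by
    simp only [L, of_apply, norm_lie_comm (E l) (E k)]
  have row_sum_nonneg (t : Finset κ) (k : κ) (hk : k ∈ t) : 0 ≤ ∑ l ∈ t, L k l := by
    simpa [L] using sum_norm_sq_lie_le_card hn hE hE_herm hk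
  have := sum_mul_mul_nonneg_of_sum_nonneg hL row_sum_nonneg Finset.univ fun k _ => hx k
  simpa only [L, of_apply, mul_sub, mul_one, Finset.sum_sub_distrib, ← Finset.sum_mul_sum, ← sq,
    sub_nonneg] using this

end Orthonormal

theorem ddvv_P_3_m_general {n ι : Type*} [Fintype n] [DecidableEq n] [Fintype ι]
    (hn : Fintype.card n ≤ 3) (A : ι → Matrix n n ℝ) (hA : ∀ r, (A r).IsSymm) :
    ∑ r, ∑ s, ‖⁅A r, A s⁆‖ ^ 2 ≤ (∑ r, ‖A r‖ ^ 2) ^ 2 := by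
  let M := Matrix n n ℝ
  let V : Submodule ℝ M := selfAdjoint.submodule ℝ M
  let a (r : ι) : V := ⟨A r, (conjTranspose_eq_transpose_of_trivial _).trans (hA r)⟩
  obtain ⟨b, hb⟩ := exists_orthonormalBasis_arePrincipalAxes (𝕜 := ℝ) a
  let β : M →ₗ[ℝ] M →ₗ[ℝ] M := LinearMap.mul ℝ M - (LinearMap.mul ℝ M).flip
  calc ∑ r, ∑ s, ‖⁅A r, A s⁆‖ ^ 2
      = ∑ k, ∑ l, secondMoment ℝ a (b k) * secondMoment ℝ a (b l) *
          ‖⁅(b k : M), (b l : M)⁆‖ ^ 2 := hb.sum_norm_sq_map₂ (β.domRestrict₁₂ V V)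
    _ ≤ (∑ k, secondMoment ℝ a (b k)) ^ 2 :=
        sum_mul_mul_norm_sq_lie_le hn (b.orthonormal.comp_linearIsometry V.subtypeₗᵢ)
          (fun k => (b k).2) fun k => secondMoment_nonneg a (b k)
    _ = (∑ r, ‖A r‖ ^ 2) ^ 2 := congrArg (· ^ 2) hb.sum_norm_sq.symm

theorem frobSq_eq_norm_sq (A : Matrix (Fin 3) (Fin 3) ℝ) : frobSq A = ‖A‖ ^ 2 := by
  simp only [frobSq, frobenius_norm_sq, Real.norm_eq_abs, sq_abs]

end Frobenius

/-- P(3,m): for real symmetric `3 × 3` matrices `A₁, …, A_m`,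
`(Σ_r ‖A_r‖²)² ≥ 2 Σ_{r<s} ‖[A_r, A_s]‖²`. -/
theorem ddvv_P_3_m (m : ℕ) (hm : 1 ≤ m) (A : Fin m → Matrix (Fin 3) (Fin 3) ℝ)
    (hA : ∀ r, (A r).IsSymm) :
    (∑ r, frobSq (A r)) ^ 2 ≥
      2 * ∑ r, ∑ s, (if r < s then frobSq (mcomm (A r) (A s)) else 0) := by
  simp only [show mcomm = (⁅·, ·⁆) from rfl, frobSq_eq_norm_sq]
  rw [two_mul_sum_ite_lt (fun r s => by rw [norm_lie_comm]) fun r => by simp [norm_lie_self]]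
  exact ddvv_P_3_m_general (by simp) A hA
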